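/- arXiv:1312.0843 — 2 statements merged into one kernel-verified Lean document; each statement's English description precedes it below -/
import Mathlib

section
/- Let σ and w be Radon measures on ℝ whose Muckenhoupt–Poisson constants [σ,w]_{A₂}* and [w,σ]_{A₂}* are finite, and suppose that sup_{ε>0} |B_ε(1_I, 1_I)| < ∞ for every finite interval I. Then for all f, g ∈ 𝓕 the function ε ↦ B_ε(f,g) is bounded on (0,∞). -/
open MeasureTheory Set
open scoped ENNReal

noncomputable section

/-- `𝓕`: finite linear combinations of indicator functions of finite half-open intervals. -/
def InF (f : ℝ → ℝ) : Prop :=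
  f ∈ Submodule.span ℝ {g : ℝ → ℝ | ∃ a b : ℝ, g = (Set.Ico a b).indicator 1}

/-- The truncated Hilbert pairing
`B_ε(f,g) = ∬_{|x-y|>ε} (x-y)⁻¹ f(y) g(x) dσ(y) dw(x)`. -/
def truncPairing (σ w : Measure ℝ) (f g : ℝ → ℝ) (ε : ℝ) : ℝ :=
  ∫ x, (∫ y, (if ε < |x - y| then (x - y)⁻¹ * f y else 0) ∂σ) * g x ∂w

/-- The Muckenhoupt–Poisson `A₂` condition `[σ,w]_{A₂}* ≤ A`: for every finite interval `I`
with center `c_I`, `σ(I) ∫_{Iᶜ} (x - c_I)⁻² dw(x) ≤ A²`. -/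
def A2star (σ w : Measure ℝ) (A : ℝ) : Prop :=
  ∀ I : Set ℝ, I.OrdConnected → Bornology.IsBounded I →
    σ I * ∫⁻ x in Iᶜ, ENNReal.ofReal (((x - (sInf I + sSup I) / 2) ^ 2)⁻¹) ∂w ≤
      ENNReal.ofReal (A ^ 2)

/-!
The truncated kernel is bounded by `ε⁻¹`, so `B_ε` is bilinear on pairs of integrable functions,
and it suffices to bound `B_ε(1_I, 1_J)` for half-open intervals. As `1_[a,b) = 1_[m,b) - 1_[m,a)`
for any `m ≤ a`, one may take `I = [m,s)` and `J = [m,t)`. Splitting the longer interval at the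
right endpoint of the shorter one leaves a diagonal term, which is bounded by hypothesis, and a
term with two adjacent intervals.

For adjacent intervals meeting at `b` the full kernel `1/|x-y|` is integrable: testing
`[σ,w]_{A₂}*` on the interval of length `r` on either side of `b` shows that the `σ`-measure of this
interval times the `w`-measure of its mirror image in `b` is `O(r²)`. Since `|x-y| < r` confines `x`
and `y` to these two intervals, the kernel lies in weak `L²` of a finite measure, hence in `L¹`.
-/

section Integrability

lemma integrable_of_measure_lt_le_rpow {α : Type*} [MeasurableSpace α] {μ : Measure α}
    [IsFiniteMeasure μ] {f : α → ℝ} (hf₀ : 0 ≤ᵐ[μ] f) (hf : AEMeasurable f μ) {C p : ℝ}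
    (hp : 1 < p) (h : ∀ t, 0 < t → μ {x | t < f x} ≤ ENNReal.ofReal (C * t ^ (-p))) :
    Integrable f μ := by
  refine ⟨hf.aestronglyMeasurable, ?_⟩
  rw [hasFiniteIntegral_iff_ofReal hf₀, lintegral_eq_lintegral_meas_lt μ hf₀ hf,
    ← Ioc_union_Ioi_eq_Ioi (zero_le_one (α := ℝ))]
  have hsmall : ∫⁻ t in Ioc (0 : ℝ) 1, μ {x | t < f x} < ⊤ :=
    calc ∫⁻ t in Ioc (0 : ℝ) 1, μ {x | t < f x}
        ≤ ∫⁻ _ in Ioc (0 : ℝ) 1, μ univ := lintegral_mono fun _ => measure_mono (subset_univ _)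
      _ < ⊤ := by simp
  have hlarge : ∫⁻ t in Ioi (1 : ℝ), μ {x | t < f x} < ⊤ :=
    calc ∫⁻ t in Ioi (1 : ℝ), μ {x | t < f x}
        ≤ ∫⁻ t in Ioi (1 : ℝ), ENNReal.ofReal (C * t ^ (-p)) :=
          setLIntegral_mono (by fun_prop) fun t ht => h t (one_pos.trans ht)
      _ < ⊤ := IntegrableOn.setLIntegral_lt_top
          ((integrableOn_Ioi_rpow_of_lt (neg_lt_neg hp) one_pos).const_mul C)
  exact (lintegral_union_le _ _ _).trans_lt (ENNReal.add_lt_top.2 ⟨hsmall, hlarge⟩)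

lemma integrableOn_inv_abs_sub_adjacent {μ ν : Measure ℝ} [IsLocallyFiniteMeasure μ]
    [IsLocallyFiniteMeasure ν] {b C p : ℝ} (hp : 1 < p)
    (h : ∀ r, 0 < r → μ (Ioo (b - r) b) * ν (Ico b (b + r)) ≤ ENNReal.ofReal (C * r ^ p))
    (a c : ℝ) :
    IntegrableOn (fun q : ℝ × ℝ => |q.1 - q.2|⁻¹) (Ico a b ×ˢ Ico b c) (μ.prod ν) := by
  have : IsFiniteMeasure ((μ.prod ν).restrict (Ico a b ×ˢ Ico b c)) := by
    rw [isFiniteMeasure_restrict, Measure.prod_prod]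
    exact ENNReal.mul_ne_top measure_Ico_lt_top.ne measure_Ico_lt_top.ne
  refine integrable_of_measure_lt_le_rpow (ae_of_all _ fun q => by positivity) (by fun_prop) hp
    (C := C) fun t ht => ?_
  have hsub : {q : ℝ × ℝ | t < |q.1 - q.2|⁻¹} ∩ Ico a b ×ˢ Ico b c ⊆
      Ioo (b - t⁻¹) b ×ˢ Ico b (b + t⁻¹) := by
    rintro ⟨x, y⟩ ⟨hlt, ⟨-, hxb⟩, ⟨hby, -⟩⟩
    dsimp only at hxb hby
    have hlt : y - x < t⁻¹ := by
      rwa [mem_ofPred_eq, abs_sub_comm, abs_of_pos (by linarith),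
        lt_inv_comm₀ ht (by linarith)] at hlt
    exact ⟨⟨by linarith, hxb⟩, hby, by linarith⟩
  calc (μ.prod ν).restrict (Ico a b ×ˢ Ico b c) {q | t < |q.1 - q.2|⁻¹}
      = (μ.prod ν) ({q | t < |q.1 - q.2|⁻¹} ∩ Ico a b ×ˢ Ico b c) :=
        Measure.restrict_apply (measurableSet_lt (by fun_prop) (by fun_prop))
    _ ≤ μ (Ioo (b - t⁻¹) b) * ν (Ico b (b + t⁻¹)) :=
        (measure_mono hsub).trans_eq (Measure.prod_prod _ _)
    _ ≤ ENNReal.ofReal (C * t⁻¹ ^ p) := h t⁻¹ (inv_pos.2 ht)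
    _ = ENNReal.ofReal (C * t ^ (-p)) := by rw [Real.inv_rpow ht.le, Real.rpow_neg ht.le]

lemma integrable_indicator_Ico_one (μ : Measure ℝ) [IsLocallyFiniteMeasure μ] (a b : ℝ) :
    Integrable ((Ico a b).indicator (1 : ℝ → ℝ)) μ :=
  (integrable_indicator_iff measurableSet_Ico).2 (integrableOn_const measure_Ico_lt_top.ne)

lemma integrable_of_mem_span {α : Type*} [MeasurableSpace α] {μ : Measure α} {S : Set (α → ℝ)}
    (hS : ∀ f ∈ S, Integrable f μ) {f : α → ℝ} (hf : f ∈ Submodule.span ℝ S) :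
    Integrable f μ := by
  induction hf using Submodule.span_induction with
  | mem f hf => exact hS f hf
  | zero => exact integrable_zero _ _ _
  | add f g _ _ hf hg => exact hf.add hg
  | smul c f _ hf => exact hf.smul c

end Integrability

lemma indicator_Ico_add_indicator_Ico {a b c : ℝ} (hab : a ≤ b) (hbc : b ≤ c) :
    (Ico a b).indicator (1 : ℝ → ℝ) + (Ico b c).indicator 1 = (Ico a c).indicator 1 := by
  rw [← Ico_union_Ico_eq_Ico hab hbc, indicator_union_of_disjoint Ico_disjoint_Ico_same]
  rfl

section MuckenhouptPoisson

lemma midpoint_sInf_sSup_mem {I : Set ℝ} (hI : I.OrdConnected) (hbdd : Bornology.IsBounded I)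
    (hne : I.Nonempty) : (sInf I + sSup I) / 2 ∈ I := by
  have hsub := subset_Icc_csInf_csSup hbdd.bddBelow hbdd.bddAbove
  rcases (csInf_le_csSup hne hbdd.bddBelow hbdd.bddAbove).eq_or_lt with heq | hlt
  · obtain ⟨x, hx⟩ := hne
    obtain ⟨hx₁, hx₂⟩ := hsub hx
    rwa [show (sInf I + sSup I) / 2 = x by linarith]
  · exact IsConnected.Ioo_csInf_csSup_subset ⟨hne, hI.isPreconnected⟩ hbdd.bddBelow hbdd.bddAbove
      ⟨by linarith, by linarith⟩

lemma measure_le_mul_setLIntegral_inv_sq (μ : Measure ℝ) {s t : Set ℝ} {c R : ℝ} (hst : s ⊆ t)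
    (hc : c ∉ s) (hR : ∀ x ∈ s, |x - c| ≤ R) :
    μ s ≤ ENNReal.ofReal (R ^ 2) * ∫⁻ x in t, ENNReal.ofReal (((x - c) ^ 2)⁻¹) ∂μ := by
  have one_le : ∀ x ∈ s, 1 ≤ ENNReal.ofReal (R ^ 2) * ENNReal.ofReal (((x - c) ^ 2)⁻¹) := by
    intro x hx
    have hxc : x - c ≠ 0 := sub_ne_zero.2 (ne_of_mem_of_not_mem hx hc)
    rw [← ENNReal.ofReal_mul (sq_nonneg R), ENNReal.one_le_ofReal, ← div_eq_mul_inv,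
      one_le_div (sq_pos_of_ne_zero hxc)]
    exact sq_le_sq' (abs_le.1 (hR x hx)).1 (abs_le.1 (hR x hx)).2
  calc μ s = ∫⁻ _ in s, 1 ∂μ := (setLIntegral_one s).symm
    _ ≤ ∫⁻ x in s, ENNReal.ofReal (R ^ 2) * ENNReal.ofReal (((x - c) ^ 2)⁻¹) ∂μ :=
      setLIntegral_mono (by fun_prop) one_le
    _ = ENNReal.ofReal (R ^ 2) * ∫⁻ x in s, ENNReal.ofReal (((x - c) ^ 2)⁻¹) ∂μ :=
      lintegral_const_mul _ (by fun_prop)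
    _ ≤ ENNReal.ofReal (R ^ 2) * ∫⁻ x in t, ENNReal.ofReal (((x - c) ^ 2)⁻¹) ∂μ := by
      gcongr

variable {σ w : Measure ℝ} {A : ℝ}

lemma A2star.measure_mul_measure_le (hA : A2star σ w A) {I J : Set ℝ} (hI : I.OrdConnected)
    (hbdd : Bornology.IsBounded I) (hIJ : Disjoint I J) {R : ℝ}
    (hR : ∀ x ∈ J, |x - (sInf I + sSup I) / 2| ≤ R) :
    σ I * w J ≤ ENNReal.ofReal (A ^ 2 * R ^ 2) := by
  rcases I.eq_empty_or_nonempty with rfl | hne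
  · simp
  set c := (sInf I + sSup I) / 2
  have hc : c ∉ J := hIJ.notMem_of_mem_left (midpoint_sInf_sSup_mem hI hbdd hne)
  calc σ I * w J
      ≤ σ I * (ENNReal.ofReal (R ^ 2) * ∫⁻ x in Iᶜ, ENNReal.ofReal (((x - c) ^ 2)⁻¹) ∂w) := by
        gcongr
        exact measure_le_mul_setLIntegral_inv_sq w hIJ.subset_compl_left hc hR
    _ = ENNReal.ofReal (R ^ 2) * (σ I * ∫⁻ x in Iᶜ, ENNReal.ofReal (((x - c) ^ 2)⁻¹) ∂w) :=
        mul_left_comm _ _ _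
    _ ≤ ENNReal.ofReal (R ^ 2) * ENNReal.ofReal (A ^ 2) := by
        gcongr
        exact hA I hI hbdd
    _ = ENNReal.ofReal (A ^ 2 * R ^ 2) := by
        rw [← ENNReal.ofReal_mul (sq_nonneg R), mul_comm]

lemma A2star.measure_Ioo_mul_measure_Ico_le (hA : A2star σ w A) (b r : ℝ) :
    σ (Ioo (b - r) b) * w (Ico b (b + r)) ≤ ENNReal.ofReal (9 / 4 * A ^ 2 * r ^ 2) := by
  rw [show 9 / 4 * A ^ 2 * r ^ 2 = A ^ 2 * (3 / 2 * r) ^ 2 by ring]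
  refine hA.measure_mul_measure_le ordConnected_Ioo (Metric.isBounded_Ioo _ _)
    (disjoint_left.2 fun x hx hx' => hx'.1.not_gt hx.2) fun x ⟨hbx, hxb⟩ => ?_
  rw [csInf_Ioo (by linarith), csSup_Ioo (by linarith), abs_le]
  constructor <;> linarith

lemma A2star.measure_Ico_mul_measure_Ioo_le (hA : A2star σ w A) (b r : ℝ) :
    σ (Ico b (b + r)) * w (Ioo (b - r) b) ≤ ENNReal.ofReal (9 / 4 * A ^ 2 * r ^ 2) := by
  rw [show 9 / 4 * A ^ 2 * r ^ 2 = A ^ 2 * (3 / 2 * r) ^ 2 by ring]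
  refine hA.measure_mul_measure_le ordConnected_Ico (Metric.isBounded_Ico _ _)
    (disjoint_left.2 fun x hx hx' => hx.1.not_gt hx'.2) fun x ⟨hbx, hxb⟩ => ?_
  rw [csInf_Ico (by linarith), csSup_Ico (by linarith), abs_le]
  constructor <;> linarith

variable [IsLocallyFiniteMeasure σ] [IsLocallyFiniteMeasure w]

lemma A2star.integrableOn_inv_abs_sub (hA : A2star σ w A) (a b c : ℝ) :
    IntegrableOn (fun q : ℝ × ℝ => |q.1 - q.2|⁻¹) (Ico a b ×ˢ Ico b c) (σ.prod w) := by
  refine integrableOn_inv_abs_sub_adjacent one_lt_two (C := 9 / 4 * A ^ 2) (fun r _ => ?_) a c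
  rw [Real.rpow_two]
  exact hA.measure_Ioo_mul_measure_Ico_le b r

lemma A2star.integrableOn_inv_abs_sub_swap (hA : A2star σ w A) (a b c : ℝ) :
    IntegrableOn (fun q : ℝ × ℝ => |q.1 - q.2|⁻¹) (Ico a b ×ˢ Ico b c) (w.prod σ) := by
  refine integrableOn_inv_abs_sub_adjacent one_lt_two (C := 9 / 4 * A ^ 2) (fun r _ => ?_) a c
  rw [Real.rpow_two, mul_comm]
  exact hA.measure_Ico_mul_measure_Ioo_le b r

end MuckenhouptPoisson

section TruncatedKernel

/-- The truncated Hilbert kernel `(x, y) ↦ 1_{|x-y|>ε} (x-y)⁻¹`, on pairs so that `B_ε(f,g)` becomes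
a single integral over the product measure. -/
def truncKernel (ε : ℝ) (q : ℝ × ℝ) : ℝ := if ε < |q.1 - q.2| then (q.1 - q.2)⁻¹ else 0

lemma measurable_truncKernel (ε : ℝ) : Measurable (truncKernel ε) :=
  Measurable.ite (measurableSet_lt (by fun_prop) (by fun_prop)) (by fun_prop) (by fun_prop)

lemma truncKernel_swap (ε : ℝ) (q : ℝ × ℝ) : truncKernel ε q.swap = -truncKernel ε q := by
  simp only [truncKernel, Prod.fst_swap, Prod.snd_swap, ← neg_sub q.1 q.2, abs_neg, inv_neg]
  split_ifs <;> simp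

lemma norm_truncKernel_le_inv_abs (ε : ℝ) (q : ℝ × ℝ) : ‖truncKernel ε q‖ ≤ |q.1 - q.2|⁻¹ := by
  unfold truncKernel
  split_ifs <;> simp

lemma norm_truncKernel_le_inv {ε : ℝ} (hε : 0 < ε) (q : ℝ × ℝ) : ‖truncKernel ε q‖ ≤ ε⁻¹ := by
  unfold truncKernel
  split_ifs with h
  · rw [norm_inv, Real.norm_eq_abs]
    exact inv_anti₀ hε h.le
  · simpa using hε.le

end TruncatedKernel

section TruncatedPairing

lemma truncPairing_smul_left (σ w : Measure ℝ) (c : ℝ) (f g : ℝ → ℝ) (ε : ℝ) :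
    truncPairing σ w (c • f) g ε = c * truncPairing σ w f g ε := by
  simp only [truncPairing, Pi.smul_apply, smul_eq_mul, mul_left_comm _ c, ← mul_ite_zero,
    integral_const_mul, mul_assoc]

variable {σ w : Measure ℝ} {f f₁ f₂ g : ℝ → ℝ} {ε : ℝ}

lemma integrable_truncKernel_mul (hf : Integrable f σ) (hg : Integrable g w) (hε : 0 < ε) :
    Integrable (fun q : ℝ × ℝ => truncKernel ε q * (g q.1 * f q.2)) (w.prod σ) :=
  (hg.mul_prod hf).bdd_mul (measurable_truncKernel ε).aestronglyMeasurable
    (ae_of_all _ (norm_truncKernel_le_inv hε))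

variable [SFinite σ] [SFinite w]

lemma truncPairing_eq_integral_prod (hf : Integrable f σ) (hg : Integrable g w) (hε : 0 < ε) :
    truncPairing σ w f g ε = ∫ q, truncKernel ε q * (g q.1 * f q.2) ∂(w.prod σ) := by
  rw [integral_prod _ (integrable_truncKernel_mul hf hg hε), truncPairing]
  congr 1 with x
  rw [← integral_mul_const]
  congr 1 with y
  simp only [truncKernel]
  split_ifs <;> ring

lemma truncPairing_swap (hf : Integrable f σ) (hg : Integrable g w) (hε : 0 < ε) :
    truncPairing w σ g f ε = -truncPairing σ w f g ε := by
  rw [truncPairing_eq_integral_prod hg hf hε, truncPairing_eq_integral_prod hf hg hε,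
    ← integral_prod_swap, ← integral_neg]
  congr 1 with q
  rw [truncKernel_swap, Prod.fst_swap, Prod.snd_swap]
  ring

lemma truncPairing_add_left (hf₁ : Integrable f₁ σ) (hf₂ : Integrable f₂ σ)
    (hg : Integrable g w) (hε : 0 < ε) :
    truncPairing σ w (f₁ + f₂) g ε = truncPairing σ w f₁ g ε + truncPairing σ w f₂ g ε := by
  rw [truncPairing_eq_integral_prod hf₁ hg hε, truncPairing_eq_integral_prod hf₂ hg hε,
    truncPairing_eq_integral_prod (hf₁.add hf₂) hg hε,
    ← integral_add (integrable_truncKernel_mul hf₁ hg hε) (integrable_truncKernel_mul hf₂ hg hε)]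
  simp only [Pi.add_apply, mul_add]

end TruncatedPairing

/-- Boundedness of `ε ↦ B_ε(f,g)` on `(0,∞)`, the property to be propagated from pairs of intervals
to all of `𝓕`. -/
def PairingBounded (σ w : Measure ℝ) (f g : ℝ → ℝ) : Prop :=
  ∃ M : ℝ, ∀ ε : ℝ, 0 < ε → |truncPairing σ w f g ε| ≤ M

namespace PairingBounded

lemma zero_left (σ w : Measure ℝ) (g : ℝ → ℝ) : PairingBounded σ w 0 g :=
  ⟨0, fun ε _ => by simp [truncPairing]⟩

lemma zero_right (σ w : Measure ℝ) (f : ℝ → ℝ) : PairingBounded σ w f 0 :=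
  ⟨0, fun ε _ => by simp [truncPairing]⟩

lemma smul_left {σ w : Measure ℝ} {f g : ℝ → ℝ} (c : ℝ) (h : PairingBounded σ w f g) :
    PairingBounded σ w (c • f) g := by
  obtain ⟨M, hM⟩ := h
  refine ⟨|c| * M, fun ε hε => ?_⟩
  rw [truncPairing_smul_left, abs_mul]
  exact mul_le_mul_of_nonneg_left (hM ε hε) (abs_nonneg c)

section SFinite

variable {σ w : Measure ℝ} [SFinite σ] [SFinite w] {f f₁ f₂ g g₁ g₂ : ℝ → ℝ}

lemma swap (h : PairingBounded σ w f g) (hf : Integrable f σ) (hg : Integrable g w) :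
    PairingBounded w σ g f := by
  obtain ⟨M, hM⟩ := h
  refine ⟨M, fun ε hε => ?_⟩
  rw [truncPairing_swap hf hg hε, abs_neg]
  exact hM ε hε

lemma add_left (h₁ : PairingBounded σ w f₁ g) (h₂ : PairingBounded σ w f₂ g)
    (hf₁ : Integrable f₁ σ) (hf₂ : Integrable f₂ σ) (hg : Integrable g w) :
    PairingBounded σ w (f₁ + f₂) g := by
  obtain ⟨M₁, hM₁⟩ := h₁
  obtain ⟨M₂, hM₂⟩ := h₂
  refine ⟨M₁ + M₂, fun ε hε => ?_⟩
  rw [truncPairing_add_left hf₁ hf₂ hg hε]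
  exact (abs_add_le _ _).trans (add_le_add (hM₁ ε hε) (hM₂ ε hε))

lemma add_right (h₁ : PairingBounded σ w f g₁) (h₂ : PairingBounded σ w f g₂)
    (hf : Integrable f σ) (hg₁ : Integrable g₁ w) (hg₂ : Integrable g₂ w) :
    PairingBounded σ w f (g₁ + g₂) :=
  ((h₁.swap hf hg₁).add_left (h₂.swap hf hg₂) hg₁ hg₂ hf).swap (hg₁.add hg₂) hf

lemma smul_right (c : ℝ) (h : PairingBounded σ w f g) (hf : Integrable f σ)
    (hg : Integrable g w) : PairingBounded σ w f (c • g) :=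
  ((h.swap hf hg).smul_left c).swap (hg.smul c) hf

lemma of_mem_span {S T : Set (ℝ → ℝ)} (hS : ∀ f ∈ S, Integrable f σ)
    (hT : ∀ g ∈ T, Integrable g w) (h : ∀ f ∈ S, ∀ g ∈ T, PairingBounded σ w f g)
    (hf : f ∈ Submodule.span ℝ S) (hg : g ∈ Submodule.span ℝ T) : PairingBounded σ w f g := by
  have hσ {f} (hf : f ∈ Submodule.span ℝ S) : Integrable f σ := integrable_of_mem_span hS hf
  have hw {g} (hg : g ∈ Submodule.span ℝ T) : Integrable g w := integrable_of_mem_span hT hg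
  induction hf, hg using Submodule.span_induction₂ with
  | mem_mem f g hf hg => exact h f hf g hg
  | zero_left g => exact zero_left σ w g
  | zero_right f => exact zero_right σ w f
  | add_left f₁ f₂ g hf₁ hf₂ hg h₁ h₂ => exact h₁.add_left h₂ (hσ hf₁) (hσ hf₂) (hw hg)
  | add_right f g₁ g₂ hf hg₁ hg₂ h₁ h₂ => exact h₁.add_right h₂ (hσ hf) (hw hg₁) (hw hg₂)
  | smul_left c f g _ _ h => exact h.smul_left c
  | smul_right c f g hf hg h => exact h.smul_right c (hσ hf) (hw hg)

lemma of_integrable_inv_abs_sub_mul (hf : Integrable f σ) (hg : Integrable g w)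
    (h : Integrable (fun q : ℝ × ℝ => |q.1 - q.2|⁻¹ * (g q.1 * f q.2)) (w.prod σ)) :
    PairingBounded σ w f g := by
  refine ⟨∫ q, ‖|q.1 - q.2|⁻¹ * (g q.1 * f q.2)‖ ∂(w.prod σ), fun ε hε => ?_⟩
  rw [truncPairing_eq_integral_prod hf hg hε, ← Real.norm_eq_abs]
  refine norm_integral_le_of_norm_le h.norm (ae_of_all _ fun q => ?_)
  rw [norm_mul, norm_mul |q.1 - q.2|⁻¹, norm_inv, norm_abs_eq_norm, Real.norm_eq_abs (q.1 - q.2)]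
  gcongr
  exact norm_truncKernel_le_inv_abs ε q

end SFinite

variable {σ w : Measure ℝ} [IsLocallyFiniteMeasure σ] [IsLocallyFiniteMeasure w]

lemma indicator_of_integrableOn {a b c d : ℝ}
    (h : IntegrableOn (fun q : ℝ × ℝ => |q.1 - q.2|⁻¹) (Ico c d ×ˢ Ico a b) (w.prod σ)) :
    PairingBounded σ w ((Ico a b).indicator 1) ((Ico c d).indicator 1) := by
  refine of_integrable_inv_abs_sub_mul (integrable_indicator_Ico_one σ a b)
    (integrable_indicator_Ico_one w c d) ?_
  refine (h.integrable_indicator (measurableSet_Ico.prod measurableSet_Ico)).congr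
    (ae_of_all _ fun q => ?_)
  dsimp only
  rw [← indicator_prod_one, ← indicator_mul_right _ fun q : ℝ × ℝ => |q.1 - q.2|⁻¹]
  simp only [Pi.one_apply, mul_one]

lemma indicator_adjacent_right {A : ℝ} (hA : A2star σ w A) (a b c : ℝ) :
    PairingBounded σ w ((Ico a b).indicator 1) ((Ico b c).indicator 1) :=
  (indicator_of_integrableOn (hA.integrableOn_inv_abs_sub a b c)).swap
    (integrable_indicator_Ico_one w b c) (integrable_indicator_Ico_one σ a b)

lemma indicator_adjacent_left {A : ℝ} (hA : A2star σ w A) (a b c : ℝ) :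
    PairingBounded σ w ((Ico b c).indicator 1) ((Ico a b).indicator 1) :=
  indicator_of_integrableOn (hA.integrableOn_inv_abs_sub_swap a b c)

lemma indicator_common_left_endpoint {A : ℝ} (hA : A2star σ w A)
    (hdiag : ∀ a b : ℝ, a < b →
      PairingBounded σ w ((Ico a b).indicator 1) ((Ico a b).indicator 1)) {m s t : ℝ}
    (hs : m < s) (ht : m < t) :
    PairingBounded σ w ((Ico m s).indicator 1) ((Ico m t).indicator 1) := by
  have hσ := integrable_indicator_Ico_one σ
  have hw := integrable_indicator_Ico_one w
  rcases le_total s t with hst | hts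
  · rw [← indicator_Ico_add_indicator_Ico hs.le hst]
    exact (hdiag m s hs).add_right (indicator_adjacent_right hA m s t) (hσ _ _) (hw _ _) (hw _ _)
  · rw [← indicator_Ico_add_indicator_Ico ht.le hts]
    exact (hdiag m t ht).add_left (indicator_adjacent_left hA m t s) (hσ _ _) (hσ _ _) (hw _ _)

end PairingBounded

lemma indicator_Ico_mem_span_common_left_endpoint {m a : ℝ} (hma : m < a) (b : ℝ) :
    (Ico a b).indicator (1 : ℝ → ℝ) ∈
      Submodule.span ℝ ((fun t => (Ico m t).indicator (1 : ℝ → ℝ)) '' Ioi m) := by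
  rcases le_or_gt b a with hba | hab
  · rw [Ico_eq_empty_of_le hba, indicator_empty']
    exact Submodule.zero_mem _
  · rw [← add_sub_cancel_left ((Ico m a).indicator (1 : ℝ → ℝ)) ((Ico a b).indicator 1),
      indicator_Ico_add_indicator_Ico hma.le hab.le]
    exact Submodule.sub_mem _ (Submodule.subset_span ⟨b, hma.trans hab, rfl⟩)
      (Submodule.subset_span ⟨a, hma, rfl⟩)

lemma PairingBounded.indicator_Ico {σ w : Measure ℝ} [IsLocallyFiniteMeasure σ]
    [IsLocallyFiniteMeasure w] {A : ℝ} (hA : A2star σ w A)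
    (hdiag : ∀ a b : ℝ, a < b →
      PairingBounded σ w ((Ico a b).indicator 1) ((Ico a b).indicator 1)) (a b c d : ℝ) :
    PairingBounded σ w ((Ico a b).indicator 1) ((Ico c d).indicator 1) := by
  obtain ⟨m, hm⟩ := exists_lt (min a c)
  obtain ⟨hma, hmc⟩ := lt_min_iff.1 hm
  refine of_mem_span ?_ ?_ ?_ (indicator_Ico_mem_span_common_left_endpoint hma b)
    (indicator_Ico_mem_span_common_left_endpoint hmc d)
  · rintro _ ⟨t, -, rfl⟩
    exact integrable_indicator_Ico_one σ m t
  · rintro _ ⟨t, -, rfl⟩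
    exact integrable_indicator_Ico_one w m t
  · rintro _ ⟨s, hs, rfl⟩ _ ⟨t, ht, rfl⟩
    exact indicator_common_left_endpoint hA hdiag hs ht

theorem statement8_general (σ w : Measure ℝ) [IsLocallyFiniteMeasure σ]
    [IsLocallyFiniteMeasure w] (A : ℝ) (hA : A2star σ w A)
    (hWBP : ∀ a b : ℝ, a < b → ∃ M : ℝ, ∀ ε : ℝ, 0 < ε →
      |truncPairing σ w ((Set.Ico a b).indicator 1) ((Set.Ico a b).indicator 1) ε| ≤ M)
    (f g : ℝ → ℝ) (hf : InF f) (hg : InF g) :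
    ∃ M : ℝ, ∀ ε : ℝ, 0 < ε → |truncPairing σ w f g ε| ≤ M := by
  refine PairingBounded.of_mem_span ?_ ?_ ?_ hf hg
  · rintro _ ⟨a, b, rfl⟩
    exact integrable_indicator_Ico_one σ a b
  · rintro _ ⟨a, b, rfl⟩
    exact integrable_indicator_Ico_one w a b
  · rintro _ ⟨a, b, rfl⟩ _ ⟨c, d, rfl⟩
    exact .indicator_Ico hA hWBP a b c d

theorem statement8 (σ w : Measure ℝ) [IsLocallyFiniteMeasure σ] [IsLocallyFiniteMeasure w]
    (A A' : ℝ) (hA : A2star σ w A) (hA' : A2star w σ A')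
    -- `sup_{ε>0} |B_ε(1_I, 1_I)| < ∞` for every finite interval `I`:
    (hWBP : ∀ a b : ℝ, a < b → ∃ M : ℝ, ∀ ε : ℝ, 0 < ε →
      |truncPairing σ w ((Set.Ico a b).indicator 1) ((Set.Ico a b).indicator 1) ε| ≤ M)
    (f g : ℝ → ℝ) (hf : InF f) (hg : InF g) :
    ∃ M : ℝ, ∀ ε : ℝ, 0 < ε → |truncPairing σ w f g ε| ≤ M := by
  exact statement8_general σ w A hA hWBP f g hf hg
end
end

section
/- Let σ and w be Radon measures on ℝ and let B : 𝓕 × 𝓕 → ℝ be a bilinear form with the Hilbert-kernel property on disjoint supports. If B satisfies the local testing conditions with constants 𝓗, 𝓗* and the Muckenhoupt–Poisson constants [σ,w]_{A₂}*, [w,σ]_{A₂}* are finite, then B satisfies the weak boundedness property |B(1_I, 1_J)| ≤ 𝓦 σ(I)^{1/2} w(J)^{1/2} for all finite intervals I, J, with 𝓦 ≤ C min(𝓗 + [σ,w]_{A₂}*, 𝓗* + [w,σ]_{A₂}*) for an absolute constant C. -/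
/-!
Split `1_J` into the indicators of the parts of `J` inside `I`, left of `I` and right of `I`. The
testing condition on `I` controls the inner part, and the outer parts are disjoint from `I`, where
`B` is given by the kernel `(x - y)⁻¹`. Splitting `I` instead gives the bound with the dual
constants.

On disjoint intervals `U`, `V` the pairs `(x, y) ∈ V × U` with `|x - y| < s` lie in a product of
adjacent intervals of length `s`, so the `A₂` condition bounds their mass by `(K s)²`. In other
words `|x - y|⁻¹` is in weak `L²(w × σ)` on `V × U` with norm at most `K`. A weak `L²` function on a
set of finite mass is integrable (Kolmogorov's inequality), which bounds its integral by
`2 K σ(U)^{1/2} w(V)^{1/2}`.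
-/

open MeasureTheory Set

noncomputable section

/-- The `L²(μ)` norm of a function. -/
def l2norm (μ : Measure ℝ) (f : ℝ → ℝ) : ℝ :=
  Real.sqrt (∫ x, f x ^ 2 ∂μ)

/-- The iterated-integral Hilbert pairing `∬ f(y) g(x) (x-y)⁻¹ dσ(y) dw(x)`. -/
def hilbertPairing (σ w : Measure ℝ) (f g : ℝ → ℝ) : ℝ :=
  ∫ x, (∫ y, f y * (x - y)⁻¹ ∂σ) * g x ∂w

/-- `f` and `g` are supported on disjoint intervals. -/
def DisjointlySupported (f g : ℝ → ℝ) : Prop :=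
  ∃ I J : Set ℝ, I.OrdConnected ∧ J.OrdConnected ∧ Disjoint I J ∧
    Function.support f ⊆ I ∧ Function.support g ⊆ J

/-- `B` has the Hilbert-kernel property on disjoint supports. -/
def HilbertKernelProp (σ w : Measure ℝ) (B : (ℝ → ℝ) → (ℝ → ℝ) → ℝ) : Prop :=
  ∀ f g : ℝ → ℝ, InF f → InF g → DisjointlySupported f g →
    B f g = hilbertPairing σ w f g

/-- `B` is bilinear on `𝓕`. -/
def BilinearOnF (B : (ℝ → ℝ) → (ℝ → ℝ) → ℝ) : Prop :=
  (∀ f f' g, InF f → InF f' → InF g → B (f + f') g = B f g + B f' g) ∧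
  (∀ (c : ℝ) (f g : ℝ → ℝ), InF f → InF g → B (c • f) g = c * B f g) ∧
  (∀ f g g', InF f → InF g → InF g' → B f (g + g') = B f g + B f g') ∧
  (∀ (c : ℝ) (f g : ℝ → ℝ), InF f → InF g → B f (c • g) = c * B f g)

/-- Local (Sawyer-type) testing conditions with constants `H`, `H'`. -/
def LocalTesting (σ w : Measure ℝ) (B : (ℝ → ℝ) → (ℝ → ℝ) → ℝ) (H H' : ℝ) : Prop :=
  (∀ (a b : ℝ) (g : ℝ → ℝ), a < b → InF g →
    |B ((Set.Ico a b).indicator 1) ((Set.Ico a b).indicator g)| ≤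
      H * Real.sqrt (σ (Set.Ico a b)).toReal * l2norm w g) ∧
  (∀ (a b : ℝ) (f : ℝ → ℝ), a < b → InF f →
    |B ((Set.Ico a b).indicator f) ((Set.Ico a b).indicator 1)| ≤
      H' * l2norm σ f * Real.sqrt (w (Set.Ico a b)).toReal)

open scoped ENNReal

section Kolmogorov

variable {α : Type*} [MeasurableSpace α] {ρ : Measure α} {g : α → ℝ} {K p : ℝ}

lemma lintegral_Ioi_ofReal_div_rpow (hp : 1 < p) (hK : 0 ≤ K) {τ : ℝ} (hτ : 0 < τ) :
    ∫⁻ t in Ioi τ, ENNReal.ofReal ((K / t) ^ p) =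
      ENNReal.ofReal (K ^ p * τ ^ (1 - p) / (p - 1)) := by
  have hpow : EqOn (fun t : ℝ => K ^ p * t ^ (-p)) (fun t => (K / t) ^ p) (Ioi τ) := fun t ht => by
    have ht0 : 0 ≤ t := (hτ.trans ht).le
    simp only [Real.div_rpow hK ht0, Real.rpow_neg ht0, ← div_eq_mul_inv]
  have hint : IntegrableOn (fun t : ℝ => (K / t) ^ p) (Ioi τ) := IntegrableOn.congr_fun
    ((integrableOn_Ioi_rpow_of_lt (neg_lt_neg hp) hτ).const_mul (K ^ p)) hpow measurableSet_Ioi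
  have hnonneg : ∀ t ∈ Ioi τ, 0 ≤ (K / t) ^ p := fun t ht =>
    Real.rpow_nonneg (div_nonneg hK (hτ.trans ht).le) p
  rw [← ofReal_integral_eq_lintegral_ofReal hint
      (ae_restrict_of_forall_mem measurableSet_Ioi hnonneg),
    ← setIntegral_congr_fun measurableSet_Ioi hpow, integral_const_mul,
    integral_Ioi_rpow_of_lt (neg_lt_neg hp) hτ, neg_add_eq_sub, neg_div, ← div_neg, neg_sub,
    mul_div_assoc]

lemma lintegral_le_of_meas_lt_le_of_scale (hp : 1 < p) (hK : 0 ≤ K) (hg0 : 0 ≤ᵐ[ρ] g)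
    (hg : AEMeasurable g ρ)
    (hweak : ∀ t : ℝ, 0 < t → ρ {x | t < g x} ≤ ENNReal.ofReal ((K / t) ^ p))
    {τ : ℝ} (hτ : 0 < τ) :
    ∫⁻ x, ENNReal.ofReal (g x) ∂ρ ≤
      ρ univ * ENNReal.ofReal τ + ENNReal.ofReal (K ^ p * τ ^ (1 - p) / (p - 1)) := by
  rw [lintegral_eq_lintegral_meas_lt ρ hg0 hg, ← Ioc_union_Ioi_eq_Ioi hτ.le]
  refine (lintegral_union_le _ _ _).trans (add_le_add ?_ ?_)
  · calc ∫⁻ t in Ioc 0 τ, ρ {x | t < g x} ≤ ∫⁻ _ in Ioc 0 τ, ρ univ :=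
          lintegral_mono fun _ => measure_mono (subset_univ _)
      _ = ρ univ * ENNReal.ofReal τ := by rw [setLIntegral_const, Real.volume_Ioc, sub_zero]
  · rw [← lintegral_Ioi_ofReal_div_rpow hp hK hτ]
    exact setLIntegral_mono' measurableSet_Ioi fun t ht => hweak t (hτ.trans ht)

lemma mul_scale_add_rpow_scale_eq (hp : 1 < p) (hK : 0 < K) {m : ℝ} (hm : 0 < m) :
    m * (K * m ^ (-p⁻¹)) + K ^ p * (K * m ^ (-p⁻¹)) ^ (1 - p) / (p - 1) =
      p / (p - 1) * K * m ^ (1 - p⁻¹) := by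
  have hp0 : p ≠ 0 := (one_pos.trans hp).ne'
  have hp1 : p - 1 ≠ 0 := (sub_pos.2 hp).ne'
  have hfirst : m * (K * m ^ (-p⁻¹)) = K * m ^ (1 - p⁻¹) := by
    rw [sub_eq_add_neg, Real.rpow_add hm, Real.rpow_one, mul_left_comm]
  have hsecond : K ^ p * (K * m ^ (-p⁻¹)) ^ (1 - p) = K * m ^ (1 - p⁻¹) := by
    have hexp : -p⁻¹ * (1 - p) = 1 - p⁻¹ := by field_simp; ring
    rw [Real.mul_rpow hK.le (by positivity), ← mul_assoc, ← Real.rpow_add hK,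
      add_sub_cancel, Real.rpow_one, ← Real.rpow_mul hm.le, hexp]
  rw [hfirst, hsecond]
  field_simp
  ring

lemma lintegral_le_of_meas_lt_le_rpow [IsFiniteMeasure ρ] (hp : 1 < p) (hK : 0 ≤ K)
    (hg0 : 0 ≤ᵐ[ρ] g) (hg : AEMeasurable g ρ)
    (hweak : ∀ t : ℝ, 0 < t → ρ {x | t < g x} ≤ ENNReal.ofReal ((K / t) ^ p)) :
    ∫⁻ x, ENNReal.ofReal (g x) ∂ρ ≤
      ENNReal.ofReal (p / (p - 1) * K * (ρ univ).toReal ^ (1 - p⁻¹)) := by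
  have : 0 < p - 1 := sub_pos.2 hp
  rcases hK.eq_or_lt with rfl | hK
  · have hzero : ∀ t ∈ Ioi (0 : ℝ), ρ {x | t < g x} ≤ 0 := fun t ht => by
      simpa [Real.zero_rpow (one_pos.trans hp).ne'] using hweak t ht
    rw [lintegral_eq_lintegral_meas_lt ρ hg0 hg]
    simpa using setLIntegral_mono' measurableSet_Ioi hzero
  rcases eq_or_ne ρ 0 with rfl | hρ
  · simp
  have hm : 0 < (ρ univ).toReal :=
    ENNReal.toReal_pos (Measure.measure_univ_ne_zero.2 hρ) (measure_ne_top ρ univ)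
  -- the scale at which the two terms of the estimate have the same order of magnitude
  set τ := K * (ρ univ).toReal ^ (-p⁻¹)
  have hτ : 0 < τ := by positivity
  refine (lintegral_le_of_meas_lt_le_of_scale hp hK.le hg0 hg hweak hτ).trans_eq ?_
  rw [← ENNReal.ofReal_toReal (measure_ne_top ρ univ), ← ENNReal.ofReal_mul (by positivity),
    ← ENNReal.ofReal_add (by positivity) (by positivity), mul_scale_add_rpow_scale_eq hp hK hm,
    ENNReal.ofReal_toReal (measure_ne_top ρ univ)]

end Kolmogorov

/-- The simple `A₂` condition with constant `K`, tested on pairs of adjacent intervals of equal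
length. -/
def AdjacentA2 (σ w : Measure ℝ) (K : ℝ) : Prop :=
  ∀ p s : ℝ, 0 < s →
    σ (Ico (p - s) p) * w (Ico p (p + s)) ≤ ENNReal.ofReal ((K * s) ^ 2) ∧
    σ (Ico p (p + s)) * w (Ico (p - s) p) ≤ ENNReal.ofReal ((K * s) ^ 2)

/-- Boundedness of `B` with constant `M` on pairs of indicators of disjoint, possibly empty,
half-open intervals. -/
def OffDiagonalBound (σ w : Measure ℝ) (B : (ℝ → ℝ) → (ℝ → ℝ) → ℝ) (M : ℝ) : Prop :=
  ∀ a b c d : ℝ, b ≤ c ∨ d ≤ a →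
    |B ((Ico a b).indicator 1) ((Ico c d).indicator 1)| ≤
      M * √(σ (Ico a b)).toReal * √(w (Ico c d)).toReal

/-- The weak boundedness property of `B` with constant `W`. -/
def WeakBoundedness (σ w : Measure ℝ) (B : (ℝ → ℝ) → (ℝ → ℝ) → ℝ) (W : ℝ) : Prop :=
  ∀ a b c d : ℝ, a < b → c < d →
    |B ((Ico a b).indicator 1) ((Ico c d).indicator 1)| ≤
      W * √(σ (Ico a b)).toReal * √(w (Ico c d)).toReal

variable {σ w : Measure ℝ} {B : (ℝ → ℝ) → (ℝ → ℝ) → ℝ} {A H H' K M W W' : ℝ}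

lemma A2star.measure_Ico_mul_le (h : A2star σ w A) {p q r : ℝ} (hpq : p < q) (hr : 0 < r)
    {R : Set ℝ} (hR : MeasurableSet R) (hdisj : Disjoint R (Ico p q))
    (hdist : ∀ x ∈ R, |x - (p + q) / 2| ≤ r) :
    σ (Ico p q) * w R ≤ ENNReal.ofReal ((A * r) ^ 2) := by
  have hkernel : ∀ x ∈ R, ENNReal.ofReal (r ^ 2)⁻¹ ≤
      ENNReal.ofReal (((x - (p + q) / 2) ^ 2)⁻¹) := fun x hx => by
    have hne : x - (p + q) / 2 ≠ 0 := fun h0 =>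
      disjoint_left.1 hdisj hx ⟨by linarith, by linarith⟩
    exact ENNReal.ofReal_le_ofReal
      (inv_anti₀ (by positivity) (sq_le_sq.2 (by rw [abs_of_pos hr]; exact hdist x hx)))
  have hpoisson : ENNReal.ofReal (r ^ 2)⁻¹ * w R ≤
      ∫⁻ x in (Ico p q)ᶜ, ENNReal.ofReal (((x - (p + q) / 2) ^ 2)⁻¹) ∂w := by
    rw [← setLIntegral_const]
    exact (setLIntegral_mono' hR hkernel).trans
      (lintegral_mono_set (subset_compl_iff_disjoint_right.2 hdisj))
  have hA2 := h (Ico p q) ordConnected_Ico (Metric.isBounded_Ico p q)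
  rw [csInf_Ico hpq, csSup_Ico hpq] at hA2
  rw [mul_pow, ENNReal.ofReal_mul (sq_nonneg A),
    ← ENNReal.div_le_iff (ENNReal.ofReal_pos.2 (by positivity)).ne' ENNReal.ofReal_ne_top]
  calc σ (Ico p q) * w R / ENNReal.ofReal (r ^ 2)
      = σ (Ico p q) * (ENNReal.ofReal (r ^ 2)⁻¹ * w R) := by
        rw [ENNReal.ofReal_inv_of_pos (by positivity), ENNReal.div_eq_inv_mul, mul_left_comm]
    _ ≤ _ := by gcongr
    _ ≤ ENNReal.ofReal (A ^ 2) := hA2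

lemma A2star.adjacentA2 (h : A2star σ w A) : AdjacentA2 σ w (3 / 2 * A) := by
  intro p s hs
  have hdist : ∀ {x c : ℝ}, c - 3 / 2 * s ≤ x → x ≤ c + 3 / 2 * s → |x - c| ≤ 3 / 2 * s :=
    fun h₁ h₂ => abs_le.2 ⟨by linarith, by linarith⟩
  rw [mul_comm (3 / 2) A, mul_assoc]
  constructor
  · refine h.measure_Ico_mul_le (by linarith) (by positivity) measurableSet_Ico ?_ ?_
    · exact disjoint_left.2 fun x hx hx' => absurd hx'.2 (not_lt.2 hx.1)
    · exact fun x hx => hdist (by linarith [hx.1]) (by linarith [hx.2])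
  · refine h.measure_Ico_mul_le (by linarith) (by positivity) measurableSet_Ico ?_ ?_
    · exact disjoint_left.2 fun x hx hx' => absurd hx.2 (not_lt.2 hx'.1)
    · exact fun x hx => hdist (by linarith [hx.1]) (by linarith [hx.2])

lemma AdjacentA2.symm (h : AdjacentA2 σ w K) : AdjacentA2 w σ K := fun p s hs => by
  simpa only [mul_comm (w _), and_comm] using h p s hs

lemma AdjacentA2.prod_dist_lt_le [SFinite σ] [SFinite w] (h : AdjacentA2 σ w K)
    {a b c d : ℝ} (hsep : b ≤ c ∨ d ≤ a) {s : ℝ} (hs : 0 < s) :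
    (w.prod σ) ({z | |z.1 - z.2| < s} ∩ Ico c d ×ˢ Ico a b) ≤ ENNReal.ofReal ((K * s) ^ 2) := by
  rcases hsep with hbc | hda
  · calc _ ≤ (w.prod σ) (Ico b (b + s) ×ˢ Ico (b - s) b) := by
          refine measure_mono ?_
          rintro ⟨x, y⟩ ⟨hxy, ⟨hcx, -⟩, -, hyb⟩
          obtain ⟨-, hlt⟩ := abs_lt.1 (mem_ofPred.1 hxy)
          exact ⟨⟨by linarith, by linarith⟩, by linarith, hyb⟩
      _ ≤ _ := by
          rw [Measure.prod_prod, mul_comm]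
          exact (h b s hs).1
  · calc _ ≤ (w.prod σ) (Ico (a - s) a ×ˢ Ico a (a + s)) := by
          refine measure_mono ?_
          rintro ⟨x, y⟩ ⟨hxy, ⟨-, hxd⟩, hay, -⟩
          obtain ⟨hlt, -⟩ := abs_lt.1 (mem_ofPred.1 hxy)
          exact ⟨⟨by linarith, by linarith⟩, hay, by linarith⟩
      _ ≤ _ := by
          rw [Measure.prod_prod, mul_comm]
          exact (h a s hs).2

lemma AdjacentA2.lintegral_kernel_le [IsLocallyFiniteMeasure σ] [IsLocallyFiniteMeasure w]
    (h : AdjacentA2 σ w K) (hK : 0 ≤ K) {a b c d : ℝ} (hsep : b ≤ c ∨ d ≤ a) :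
    ∫⁻ x in Ico c d, ∫⁻ y in Ico a b, ENNReal.ofReal |x - y|⁻¹ ∂σ ∂w ≤
      ENNReal.ofReal (2 * K * √(σ (Ico a b)).toReal * √(w (Ico c d)).toReal) := by
  have hmeas : Measurable fun z : ℝ × ℝ => |z.1 - z.2|⁻¹ := by fun_prop
  have hfin : IsFiniteMeasure ((w.prod σ).restrict (Ico c d ×ˢ Ico a b)) := ⟨by
    rw [Measure.restrict_apply_univ, Measure.prod_prod]
    exact ENNReal.mul_lt_top measure_Ico_lt_top measure_Ico_lt_top⟩
  have hweak : ∀ t : ℝ, 0 < t →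
      (w.prod σ).restrict (Ico c d ×ˢ Ico a b) {z | t < |z.1 - z.2|⁻¹} ≤
        ENNReal.ofReal ((K / t) ^ (2 : ℝ)) := fun t ht => by
    rw [Real.rpow_two, div_eq_mul_inv,
      Measure.restrict_apply (measurableSet_lt measurable_const hmeas)]
    refine (measure_mono (inter_subset_inter_left _ fun z hz => ?_)).trans
      (h.prod_dist_lt_le hsep (inv_pos.2 ht))
    exact (lt_inv_comm₀ ht (inv_pos.1 (ht.trans hz))).1 hz
  rw [← lintegral_prod (fun z : ℝ × ℝ => ENNReal.ofReal |z.1 - z.2|⁻¹)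
    hmeas.ennreal_ofReal.aemeasurable, Measure.prod_restrict]
  refine (lintegral_le_of_meas_lt_le_rpow one_lt_two hK (ae_of_all _ fun z => by positivity)
    hmeas.aemeasurable hweak).trans_eq ?_
  rw [Measure.restrict_apply_univ, Measure.prod_prod, ENNReal.toReal_mul, mul_comm (w _).toReal,
    mul_assoc (2 * K), ← Real.sqrt_mul ENNReal.toReal_nonneg, Real.sqrt_eq_rpow]
  norm_num

lemma integral_indicator_one_mul {α : Type*} [MeasurableSpace α] (μ : Measure α) {S : Set α}
    (hS : MeasurableSet S) (F : α → ℝ) :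
    ∫ y, S.indicator 1 y * F y ∂μ = ∫ y in S, F y ∂μ := by
  simp only [← integral_indicator hS, ← indicator_mul_left, Pi.one_apply, one_mul]

lemma hilbertPairing_indicator (σ w : Measure ℝ) {U V : Set ℝ} (hU : MeasurableSet U)
    (hV : MeasurableSet V) :
    hilbertPairing σ w (U.indicator 1) (V.indicator 1) =
      ∫ x in V, ∫ y in U, (x - y)⁻¹ ∂σ ∂w := by
  simp only [hilbertPairing, mul_comm _ (V.indicator 1 _), integral_indicator_one_mul _ hU,
    integral_indicator_one_mul _ hV]

lemma enorm_hilbertPairing_indicator_le (σ w : Measure ℝ) {U V : Set ℝ} (hU : MeasurableSet U)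
    (hV : MeasurableSet V) :
    ‖hilbertPairing σ w (U.indicator 1) (V.indicator 1)‖ₑ ≤
      ∫⁻ x in V, ∫⁻ y in U, ENNReal.ofReal |x - y|⁻¹ ∂σ ∂w := by
  rw [hilbertPairing_indicator σ w hU hV]
  refine (enorm_integral_le_lintegral_enorm _).trans (lintegral_mono fun x => ?_)
  simpa only [Real.enorm_eq_ofReal_abs, abs_inv] using
    enorm_integral_le_lintegral_enorm (μ := σ.restrict U) fun y => (x - y)⁻¹

lemma InF.indicator_Ico (a b : ℝ) : InF ((Ico a b).indicator 1) :=
  Submodule.subset_span ⟨a, b, rfl⟩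

lemma InF.add {f g : ℝ → ℝ} (hf : InF f) (hg : InF g) : InF (f + g) :=
  Submodule.add_mem _ hf hg

lemma disjointlySupported_indicator_Ico {a b c d : ℝ} (hsep : b ≤ c ∨ d ≤ a) :
    DisjointlySupported ((Ico a b).indicator 1) ((Ico c d).indicator 1) := by
  refine ⟨Ico a b, Ico c d, ordConnected_Ico, ordConnected_Ico, disjoint_left.2 ?_,
    support_indicator_subset, support_indicator_subset⟩
  rintro x ⟨hax, hxb⟩ ⟨hcx, hxd⟩
  rcases hsep with h | h <;> linarith

lemma HilbertKernelProp.offDiagonalBound [IsLocallyFiniteMeasure σ] [IsLocallyFiniteMeasure w]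
    (hB : HilbertKernelProp σ w B) (hK : 0 ≤ K) (h : AdjacentA2 σ w K) :
    OffDiagonalBound σ w B (2 * K) := by
  intro a b c d hsep
  rw [hB _ _ (.indicator_Ico a b) (.indicator_Ico c d) (disjointlySupported_indicator_Ico hsep),
    ← ENNReal.ofReal_le_ofReal_iff (by positivity), ← Real.enorm_eq_ofReal_abs]
  exact (enorm_hilbertPairing_indicator_le σ w measurableSet_Ico measurableSet_Ico).trans
    (h.lintegral_kernel_le hK hsep)

lemma indicator_Ico_eq_add_add {α β : Type*} [LinearOrder α] [AddZeroClass β] [One β] {a b : α}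
    (hab : a ≤ b) (c d : α) :
    (Ico c d).indicator (1 : α → β) =
      (Ico c (min d a)).indicator 1 + (Ico (max a c) (min b d)).indicator 1 +
        (Ico (max b c) d).indicator 1 := by
  ext x
  simp only [indicator_apply, mem_Ico, Pi.add_apply, Pi.one_apply, lt_min_iff, max_le_iff]
  grind [add_zero, zero_add]

lemma l2norm_indicator_one (μ : Measure ℝ) {S : Set ℝ} (hS : MeasurableSet S) :
    l2norm μ (S.indicator 1) = √(μ S).toReal := by
  have hsq : (fun x => S.indicator (1 : ℝ → ℝ) x ^ 2) = S.indicator 1 := by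
    ext x
    by_cases hx : x ∈ S <;> simp [hx]
  rw [l2norm, hsq, integral_indicator_one hS, Measure.real]

lemma LocalTesting.abs_indicator_Ico_le (h : LocalTesting σ w B H H') {a b c d : ℝ} (hab : a < b)
    (hsub : Ico c d ⊆ Ico a b) :
    |B ((Ico a b).indicator 1) ((Ico c d).indicator 1)| ≤
      H * √(σ (Ico a b)).toReal * √(w (Ico c d)).toReal := by
  have htest := h.1 a b _ hab (.indicator_Ico c d)
  rwa [indicator_indicator, inter_eq_right.2 hsub, l2norm_indicator_one w measurableSet_Ico]
    at htest

lemma sqrt_toReal_measure_mono {α : Type*} [MeasurableSpace α] {μ : Measure α} {S T : Set α}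
    (h : S ⊆ T) (hT : μ T ≠ ∞) : √(μ S).toReal ≤ √(μ T).toReal :=
  Real.sqrt_le_sqrt (ENNReal.toReal_mono hT (measure_mono h))

lemma LocalTesting.weakBoundedness [IsLocallyFiniteMeasure w] (htest : LocalTesting σ w B H H')
    (hbil : BilinearOnF B) (hoff : OffDiagonalBound σ w B M) (hH : 0 ≤ H) (hM : 0 ≤ M) :
    WeakBoundedness σ w B (H + 2 * M) := by
  intro a b c d hab _
  set f : ℝ → ℝ := (Ico a b).indicator 1
  set S := √(σ (Ico a b)).toReal
  set T := √(w (Ico c d)).toReal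
  have hfin : w (Ico c d) ≠ ∞ := measure_Ico_lt_top.ne
  have hleft : |B f ((Ico c (min d a)).indicator 1)| ≤ M * S * T :=
    (hoff a b _ _ (.inr (min_le_right d a))).trans <| by
      gcongr
      exact sqrt_toReal_measure_mono (Ico_subset_Ico le_rfl (min_le_left d a)) hfin
  have hinner : |B f ((Ico (max a c) (min b d)).indicator 1)| ≤ H * S * T :=
    (htest.abs_indicator_Ico_le hab
      (Ico_subset_Ico (le_max_left a c) (min_le_left b d))).trans <| by
      gcongr
      exact sqrt_toReal_measure_mono (Ico_subset_Ico (le_max_right a c) (min_le_right b d)) hfin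
  have hright : |B f ((Ico (max b c) d).indicator 1)| ≤ M * S * T :=
    (hoff a b _ _ (.inl (le_max_left b c))).trans <| by
      gcongr
      exact sqrt_toReal_measure_mono (Ico_subset_Ico (le_max_right b c) le_rfl) hfin
  have hF := InF.indicator_Ico
  rw [indicator_Ico_eq_add_add hab.le c d,
    hbil.2.2.1 _ _ _ (hF a b) ((hF _ _).add (hF _ _)) (hF _ _),
    hbil.2.2.1 _ _ _ (hF a b) (hF _ _) (hF _ _)]
  linarith [abs_add_three (B f ((Ico c (min d a)).indicator 1))
    (B f ((Ico (max a c) (min b d)).indicator 1)) (B f ((Ico (max b c) d).indicator 1))]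

lemma BilinearOnF.flip (h : BilinearOnF B) : BilinearOnF (flip B) :=
  ⟨fun f f' g hf hf' hg => h.2.2.1 g f f' hg hf hf', fun c f g hf hg => h.2.2.2 c g f hg hf,
    fun f g g' hf hg hg' => h.1 g g' f hg hg' hf, fun c f g hf hg => h.2.1 c g f hg hf⟩

lemma LocalTesting.flip (h : LocalTesting σ w B H H') : LocalTesting w σ (flip B) H' H :=
  ⟨fun a b g hab hg => (h.2 a b g hab hg).trans_eq (mul_right_comm _ _ _),
    fun a b f hab hf => (h.1 a b f hab hf).trans_eq (mul_right_comm _ _ _)⟩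

lemma OffDiagonalBound.flip (h : OffDiagonalBound σ w B M) : OffDiagonalBound w σ (flip B) M :=
  fun a b c d hsep => (h c d a b hsep.symm).trans_eq (mul_right_comm _ _ _)

lemma WeakBoundedness.flip (h : WeakBoundedness σ w B W) : WeakBoundedness w σ (flip B) W :=
  fun a b c d hab hcd => (h c d a b hcd hab).trans_eq (mul_right_comm _ _ _)

lemma WeakBoundedness.min (h : WeakBoundedness σ w B W) (h' : WeakBoundedness σ w B W') :
    WeakBoundedness σ w B (min W W') := fun a b c d hab hcd => by
  rcases min_choice W W' with hmin | hmin <;> rw [hmin]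
  exacts [h a b c d hab hcd, h' a b c d hab hcd]

lemma WeakBoundedness.mono (h : WeakBoundedness σ w B W) (hW : W ≤ W') :
    WeakBoundedness σ w B W' := fun a b c d hab hcd =>
  (h a b c d hab hcd).trans (by gcongr)

theorem statement17 :
    ∃ C : ℝ, 0 < C ∧
      ∀ (σ w : Measure ℝ) [IsLocallyFiniteMeasure σ] [IsLocallyFiniteMeasure w]
        (B : (ℝ → ℝ) → (ℝ → ℝ) → ℝ) (H H' A A' : ℝ),
        0 ≤ H → 0 ≤ H' → 0 ≤ A → 0 ≤ A' →
        BilinearOnF B →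
        HilbertKernelProp σ w B →
        LocalTesting σ w B H H' →
        A2star σ w A → A2star w σ A' →
        -- the weak boundedness property with
        -- `𝓦 ≤ C min(𝓗 + [σ,w]_{A₂}*, 𝓗* + [w,σ]_{A₂}*)`:
        ∀ a b c d : ℝ, a < b → c < d →
          |B ((Set.Ico a b).indicator 1) ((Set.Ico c d).indicator 1)| ≤
            C * min (H + A) (H' + A') *
              Real.sqrt (σ (Set.Ico a b)).toReal * Real.sqrt (w (Set.Ico c d)).toReal := by
  refine ⟨6, by norm_num, ?_⟩
  intro σ w _ _ B H H' A A' hH hH' hA hA' hbil hker htest hA2 hA2'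
  have hoff := hker.offDiagonalBound (by positivity) hA2.adjacentA2
  have hoff' := hker.offDiagonalBound (by positivity) hA2'.adjacentA2.symm
  have hwbp := htest.weakBoundedness hbil hoff hH (by positivity)
  have hwbp' := (htest.flip.weakBoundedness hbil.flip hoff'.flip hH' (by positivity)).flip
  refine (hwbp.min hwbp').mono ?_
  rw [mul_min_of_nonneg _ _ (by norm_num)]
  exact min_le_min (by linarith) (by linarith)
end
end
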